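/- arXiv:1301.2677 — 3 statements merged into one kernel-verified Lean document; each statement's English description precedes it below -/
import Mathlib

section
/- Let m, n ≥ 1 and let (τ̄_{k,l}) be an m × n matrix with τ̄_{k,l} > 0 for all k, l and ∑_{k=1}^m ∑_{l=1}^n τ̄_{k,l} = 1. Then there exist vectors μ ∈ ℝ^m and λ ∈ ℝ^n such that μ_k + λ_l > 0 for all k, l, ∑_{l=1}^n τ̄_{k,l}/(μ_k + λ_l) = 1/m for every k, and ∑_{k=1}^m τ̄_{k,l}/(μ_k + λ_l) = 1/n for every l; consequently the matrix with entries r_{k,l} = τ̄_{k,l}/(μ_k + λ_l) belongs to the transportation polytope with row sums 1/m and column sums 1/n and has all entries positive. -/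
open Finset

lemma exists_pos_maximizer (m n : ℕ) (hm : 1 ≤ m) (hn : 1 ≤ n)
    (τ : Fin m → Fin n → ℝ) (hτ : ∀ k l, 0 < τ k l) :
    ∃ r : Fin m → Fin n → ℝ, (∀ k l, 0 < r k l) ∧
      (∀ k, ∑ l, r k l = 1 / (m : ℝ)) ∧ (∀ l, ∑ k, r k l = 1 / (n : ℝ)) ∧
      ∀ q : Fin m → Fin n → ℝ, (∀ k l, 0 < q k l) →
        (∀ k, ∑ l, q k l = 1 / (m : ℝ)) → (∀ l, ∑ k, q k l = 1 / (n : ℝ)) →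
        ∑ k, ∑ l, τ k l * Real.log (q k l) ≤ ∑ k, ∑ l, τ k l * Real.log (r k l) := by
  have hm0 : (0 : ℝ) < m := by exact_mod_cast hm
  have hn0 : (0 : ℝ) < n := by exact_mod_cast hn
  let P : Set (Fin m → Fin n → ℝ) := {q | (∀ k l, 0 ≤ q k l) ∧
        (∀ k, ∑ l, q k l = 1 / (m : ℝ)) ∧ (∀ l, ∑ k, q k l = 1 / (n : ℝ))}
  let F : (Fin m → Fin n → ℝ) → ℝ := fun q => ∏ k, ∏ l, (q k l) ^ (τ k l)
  have hF : Continuous F := by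
    refine continuous_finsetProd _ fun k _ => continuous_finsetProd _ fun l _ => ?_
    exact Continuous.rpow_const (by fun_prop) (fun _ => Or.inr (hτ k l).le)
  have hPc : IsClosed P := by
    have h1 : IsClosed {q : Fin m → Fin n → ℝ | ∀ k l, 0 ≤ q k l} := by
      simp only [Set.setOf_forall]
      exact isClosed_iInter fun k => isClosed_iInter fun l =>
        isClosed_le continuous_const (by fun_prop)
    have h2 : IsClosed {q : Fin m → Fin n → ℝ | ∀ k, ∑ l, q k l = 1 / (m : ℝ)} := by
      simp only [Set.setOf_forall]
      exact isClosed_iInter fun k => isClosed_eq (by fun_prop) continuous_const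
    have h3 : IsClosed {q : Fin m → Fin n → ℝ | ∀ l, ∑ k, q k l = 1 / (n : ℝ)} := by
      simp only [Set.setOf_forall]
      exact isClosed_iInter fun k => isClosed_eq (by fun_prop) continuous_const
    exact h1.inter (h2.inter h3)
  have hPk : IsCompact P := by
    refine IsCompact.of_isClosed_subset
      (isCompact_Icc (a := fun _ _ => (0 : ℝ)) (b := fun _ _ => 1 / (m : ℝ))) hPc ?_
    rintro q ⟨h1, h2, -⟩
    refine ⟨fun k l => h1 k l, fun k l => ?_⟩
    rw [← h2 k]
    exact single_le_sum (f := fun l => q k l) (fun l _ => h1 k l) (mem_univ l)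
  have hU : (fun _ _ => 1 / ((m : ℝ) * n)) ∈ P := by
    refine ⟨fun k l => by positivity, fun k => ?_, fun l => ?_⟩
    · simp; field_simp
    · simp; field_simp
  have hpos : ∀ q : Fin m → Fin n → ℝ, (∀ k l, 0 < q k l) → 0 < F q := fun q hq =>
    prod_pos fun k _ => prod_pos fun l _ => Real.rpow_pos_of_pos (hq k l) _
  have hlog : ∀ q : Fin m → Fin n → ℝ, (∀ k l, 0 < q k l) →
      Real.log (F q) = ∑ k, ∑ l, τ k l * Real.log (q k l) := by
    intro q hq
    have hq' : ∀ k l, 0 < (q k l) ^ (τ k l) := fun k l => Real.rpow_pos_of_pos (hq k l) _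
    rw [Real.log_prod (fun k _ => (prod_pos fun l _ => hq' k l).ne')]
    refine sum_congr rfl fun k _ => ?_
    rw [Real.log_prod (fun l _ => (hq' k l).ne')]
    exact sum_congr rfl fun l _ => Real.log_rpow (hq k l) _
  obtain ⟨r, hr, hmax⟩ := hPk.exists_isMaxOn ⟨_, hU⟩ hF.continuousOn
  have hFr : 0 < F r := lt_of_lt_of_le (hpos _ fun k l => by positivity) (hmax hU)
  have hrpos : ∀ k l, 0 < r k l := by
    intro k l
    refine lt_of_le_of_ne (hr.1 k l) fun h => hFr.ne' ?_
    refine prod_eq_zero (mem_univ k) (prod_eq_zero (mem_univ l) ?_)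
    rw [← h, Real.zero_rpow (hτ k l).ne']
  refine ⟨r, hrpos, hr.2.1, hr.2.2, fun q hq h1 h2 => ?_⟩
  rw [← hlog q hq, ← hlog r hrpos]
  exact Real.log_le_log (hpos q hq) (hmax (⟨fun k l => (hq k l).le, h1, h2⟩ : q ∈ P))

/-- Existence of Lagrange multiplier vectors `μ, λ` with `μ_k + λ_l > 0`,
`∑_l τ̄_{k,l}/(μ_k+λ_l) = 1/m` and `∑_k τ̄_{k,l}/(μ_k+λ_l) = 1/n`; consequently
`r_{k,l} = τ̄_{k,l}/(μ_k+λ_l)` is a strictly positive matrix in the transportation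
polytope with row sums `1/m` and column sums `1/n`. -/
theorem lagrange_multipliers_exist (m n : ℕ) (hm : 1 ≤ m) (hn : 1 ≤ n)
    (τ : Fin m → Fin n → ℝ) (hτ : ∀ k l, 0 < τ k l)
    (hsum : ∑ k : Fin m, ∑ l : Fin n, τ k l = 1) :
    ∃ (μ : Fin m → ℝ) (lam : Fin n → ℝ),
      (∀ k l, 0 < μ k + lam l) ∧
      (∀ k, ∑ l : Fin n, τ k l / (μ k + lam l) = 1 / (m : ℝ)) ∧
      (∀ l, ∑ k : Fin m, τ k l / (μ k + lam l) = 1 / (n : ℝ)) ∧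
      (∀ k l, 0 < τ k l / (μ k + lam l)) := by
  obtain ⟨r, hr, hrow, hcol, hmax⟩ := exists_pos_maximizer m n hm hn τ hτ
  let k0 : Fin m := ⟨0, hm⟩
  let l0 : Fin n := ⟨0, hn⟩
  have key : ∀ k l, τ k l / r k l - τ k l0 / r k l0 - τ k0 l / r k0 l + τ k0 l0 / r k0 l0 = 0 := by
    intro k l
    let a : Fin m → ℝ := fun i => (if i = k then 1 else 0) - (if i = k0 then 1 else 0)
    let b : Fin n → ℝ := fun j => (if j = l then 1 else 0) - (if j = l0 then 1 else 0)
    have ha : ∑ i, a i = 0 := by simp [a]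
    have hb : ∑ j, b j = 0 := by simp [b]
    let φ : ℝ → ℝ := fun t => ∑ i, ∑ j, τ i j * Real.log (r i j + t * (a i * b j))
    have hder : HasDerivAt φ (∑ i, ∑ j, τ i j * ((a i * b j) / r i j)) 0 := by
      refine HasDerivAt.fun_sum fun i _ => HasDerivAt.fun_sum fun j _ => ?_
      refine HasDerivAt.const_mul _ ?_
      have h1 : HasDerivAt (fun t : ℝ => r i j + t * (a i * b j)) (a i * b j) 0 := by
        simpa using ((hasDerivAt_id (0 : ℝ)).mul_const (a i * b j)).const_add (r i j)
      have h2 := h1.log (by simpa using (hr i j).ne')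
      simpa using h2
    have hloc : IsLocalMax φ 0 := by
      have hev : ∀ᶠ t in nhds (0 : ℝ), ∀ i j, 0 < r i j + t * (a i * b j) := by
        rw [Filter.eventually_all]
        intro i
        rw [Filter.eventually_all]
        intro j
        have hc : Continuous (fun t : ℝ => r i j + t * (a i * b j)) := by fun_prop
        exact hc.continuousAt.eventually (lt_mem_nhds (by simpa using hr i j))
      filter_upwards [hev] with t ht
      have := hmax (fun i j => r i j + t * (a i * b j)) ht
        (fun i => by rw [sum_add_distrib, hrow, ← mul_sum, ← mul_sum, hb]; simp)
        (fun j => by rw [sum_add_distrib, hcol, ← mul_sum, ← sum_mul, ha]; simp)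
      simpa [φ] using this
    have h0 := hloc.hasDerivAt_eq_zero hder
    have h1 : ∑ i, ∑ j, τ i j * ((a i * b j) / r i j)
        = ∑ i, a i * ∑ j, b j * (τ i j / r i j) := by
      refine sum_congr rfl fun i _ => ?_
      rw [mul_sum]
      exact sum_congr rfl fun j _ => by ring
    rw [h1] at h0
    simp only [a, b, sub_mul, sum_sub_distrib, ite_mul, one_mul, zero_mul, sum_ite_eq',
      mem_univ, if_true] at h0
    linarith
  have hg : ∀ k l, τ k l0 / r k l0 + (τ k0 l / r k0 l - τ k0 l0 / r k0 l0) = τ k l / r k l :=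
    fun k l => by linarith [key k l]
  have hq : ∀ k l, τ k l / (τ k l / r k l) = r k l := fun k l => by
    have := (hτ k l).ne'
    have := (hr k l).ne'
    field_simp
  refine ⟨fun k => τ k l0 / r k l0, fun l => τ k0 l / r k0 l - τ k0 l0 / r k0 l0, ?_, ?_, ?_, ?_⟩
  · intro k l
    simp only [hg]
    exact div_pos (hτ k l) (hr k l)
  · intro k
    simp only [hg, hq, hrow]
  · intro l
    simp only [hg, hq, hcol]
  · intro k l
    simp only [hg, hq, hr]
end

section
/- Let c = (c_{k,l}) be an m × n real matrix with all entries strictly positive, set c_{k+} = ∑_l c_{k,l}, c_{+l} = ∑_k c_{k,l}, c_{++} = ∑_{k,l} c_{k,l}, and define the m × n matrix D by D_{k,l} = c_{k,l}/√(c_{k+} c_{+l}). Then the largest singular value of D equals 1; equivalently, uᵀ D v ≤ ‖u‖‖v‖ for all u ∈ ℝ^m, v ∈ ℝ^n, and equality holds for the unit vectors u with u_k = √(c_{k+}/c_{++}) and v with v_l = √(c_{+l}/c_{++}); in particular D Dᵀ u = u for this u. -/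
open Finset

/-- The normalized matrix `D_{k,l} = c_{k,l}/√(c_{k+} c_{+l})`. -/
noncomputable def Dmat {m n : ℕ} (c : Fin m → Fin n → ℝ) (k : Fin m) (l : Fin n) : ℝ :=
  c k l / Real.sqrt ((∑ l' : Fin n, c k l') * (∑ k' : Fin m, c k' l))

/-- The unit vector `u_k = √(c_{k+}/c_{++})`. -/
noncomputable def uStar {m n : ℕ} (c : Fin m → Fin n → ℝ) (k : Fin m) : ℝ :=
  Real.sqrt ((∑ l' : Fin n, c k l') / (∑ k' : Fin m, ∑ l' : Fin n, c k' l'))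

/-- The unit vector `v_l = √(c_{+l}/c_{++})`. -/
noncomputable def vStar {m n : ℕ} (c : Fin m → Fin n → ℝ) (l : Fin n) : ℝ :=
  Real.sqrt ((∑ k' : Fin m, c k' l) / (∑ k' : Fin m, ∑ l' : Fin n, c k' l'))

/-- The largest singular value of `D = G^{-1/2} c H^{-1/2}` equals `1`:
`uᵀ D v ≤ ‖u‖ ‖v‖` for all `u, v`, with equality at the unit vectors
`u_k = √(c_{k+}/c_{++})`, `v_l = √(c_{+l}/c_{++})`; in particular `D Dᵀ u = u`
for this `u`. -/
theorem largest_singular_value_one (m n : ℕ) (hm : 1 ≤ m) (hn : 1 ≤ n)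
    (c : Fin m → Fin n → ℝ) (hc : ∀ k l, 0 < c k l) :
    (∀ (u : Fin m → ℝ) (v : Fin n → ℝ),
      ∑ k : Fin m, ∑ l : Fin n, u k * Dmat c k l * v l
        ≤ Real.sqrt (∑ k : Fin m, u k ^ 2) * Real.sqrt (∑ l : Fin n, v l ^ 2)) ∧
    (∑ k : Fin m, uStar c k ^ 2 = 1) ∧
    (∑ l : Fin n, vStar c l ^ 2 = 1) ∧
    (∑ k : Fin m, ∑ l : Fin n, uStar c k * Dmat c k l * vStar c l = 1) ∧
    (∀ k, ∑ l : Fin n, Dmat c k l * (∑ k' : Fin m, Dmat c k' l * uStar c k')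
        = uStar c k) := by
  have : Nonempty (Fin m) := ⟨⟨0, hm⟩⟩
  have : Nonempty (Fin n) := ⟨⟨0, hn⟩⟩
  have hR : ∀ k, 0 < ∑ l' : Fin n, c k l' := fun k =>
    Finset.sum_pos (fun l _ => hc k l) Finset.univ_nonempty
  have hC : ∀ l, 0 < ∑ k' : Fin m, c k' l := fun l =>
    Finset.sum_pos (fun k _ => hc k l) Finset.univ_nonempty
  have hT : 0 < ∑ k' : Fin m, ∑ l' : Fin n, c k' l' :=
    Finset.sum_pos (fun k _ => hR k) Finset.univ_nonempty
  have hu1 : ∑ k : Fin m, uStar c k ^ 2 = 1 := by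
    have : ∀ k, uStar c k ^ 2
        = (∑ l' : Fin n, c k l') / (∑ k' : Fin m, ∑ l' : Fin n, c k' l') := fun k =>
      Real.sq_sqrt (div_pos (hR k) hT).le
    simp_rw [this]
    rw [← Finset.sum_div, div_self hT.ne']
  have hv1 : ∑ l : Fin n, vStar c l ^ 2 = 1 := by
    have : ∀ l, vStar c l ^ 2
        = (∑ k' : Fin m, c k' l) / (∑ k' : Fin m, ∑ l' : Fin n, c k' l') := fun l =>
      Real.sq_sqrt (div_pos (hC l) hT).le
    simp_rw [this]
    rw [← Finset.sum_div, Finset.sum_comm, div_self hT.ne']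
  have hDv : ∀ k, ∑ l : Fin n, Dmat c k l * vStar c l = uStar c k := by
    intro k
    have : ∀ l, Dmat c k l * vStar c l = c k l * (uStar c k / (∑ l' : Fin n, c k l')) := by
      intro l
      unfold Dmat vStar uStar
      rw [Real.sqrt_mul (hR k).le, Real.sqrt_div (hC l).le, Real.sqrt_div (hR k).le]
      have h1 := Real.sqrt_pos.2 (hR k)
      have h2 := Real.sqrt_pos.2 (hC l)
      have h3 := Real.sqrt_pos.2 hT
      have h4 := Real.sq_sqrt (hR k).le
      have h5 := hR k
      generalize (∑ l' : Fin n, c k l') = R at *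
      field_simp
      rw [h4]
    simp_rw [this]
    rw [← Finset.sum_mul, mul_div_cancel₀ _ (hR k).ne']
  have hDu : ∀ l, ∑ k : Fin m, Dmat c k l * uStar c k = vStar c l := by
    intro l
    have : ∀ k, Dmat c k l * uStar c k = c k l * (vStar c l / (∑ k' : Fin m, c k' l)) := by
      intro k
      unfold Dmat vStar uStar
      rw [Real.sqrt_mul (hR k).le, Real.sqrt_div (hC l).le, Real.sqrt_div (hR k).le]
      have h1 := Real.sqrt_pos.2 (hR k)
      have h2 := Real.sqrt_pos.2 (hC l)
      have h3 := Real.sqrt_pos.2 hT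
      have h4 := Real.sq_sqrt (hC l).le
      have h5 := hC l
      generalize (∑ k' : Fin m, c k' l) = R at *
      field_simp
      rw [h4]
    simp_rw [this]
    rw [← Finset.sum_mul, mul_div_cancel₀ _ (hC l).ne']
  refine ⟨?_, hu1, hv1, ?_, ?_⟩
  · intro u v
    have key := Real.sum_mul_le_sqrt_mul_sqrt (Finset.univ : Finset (Fin m × Fin n))
      (fun p => u p.1 * Real.sqrt (c p.1 p.2 / ∑ l' : Fin n, c p.1 l'))
      (fun p => v p.2 * Real.sqrt (c p.1 p.2 / ∑ k' : Fin m, c k' p.2))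
    simp only [Fintype.sum_prod_type] at key
    have e1 : ∑ k : Fin m, ∑ l : Fin n, (u k * Real.sqrt (c k l / ∑ l' : Fin n, c k l')) ^ 2
        = ∑ k : Fin m, u k ^ 2 := by
      refine Finset.sum_congr rfl fun k _ => ?_
      have : ∀ l, (u k * Real.sqrt (c k l / ∑ l' : Fin n, c k l')) ^ 2
          = u k ^ 2 * (c k l / ∑ l' : Fin n, c k l') := fun l => by
        rw [mul_pow, Real.sq_sqrt (div_pos (hc k l) (hR k)).le]
      simp_rw [this]
      rw [← Finset.mul_sum, ← Finset.sum_div, div_self (hR k).ne', mul_one]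
    have e2 : ∑ k : Fin m, ∑ l : Fin n, (v l * Real.sqrt (c k l / ∑ k' : Fin m, c k' l)) ^ 2
        = ∑ l : Fin n, v l ^ 2 := by
      rw [Finset.sum_comm]
      refine Finset.sum_congr rfl fun l _ => ?_
      have : ∀ k, (v l * Real.sqrt (c k l / ∑ k' : Fin m, c k' l)) ^ 2
          = v l ^ 2 * (c k l / ∑ k' : Fin m, c k' l) := fun k => by
        rw [mul_pow, Real.sq_sqrt (div_pos (hc k l) (hC l)).le]
      simp_rw [this]
      rw [← Finset.mul_sum, ← Finset.sum_div, div_self (hC l).ne', mul_one]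
    rw [e1, e2] at key
    refine le_trans (le_of_eq ?_) key
    refine Finset.sum_congr rfl fun k _ => Finset.sum_congr rfl fun l _ => ?_
    unfold Dmat
    rw [Real.sqrt_mul (hR k).le, Real.sqrt_div (hc k l).le, Real.sqrt_div (hc k l).le]
    have h1 := Real.sqrt_pos.2 (hR k)
    have h2 := Real.sqrt_pos.2 (hC l)
    have h4 := Real.sq_sqrt (hc k l).le
    field_simp
    rw [h4]; ring
  · simp_rw [mul_assoc, ← Finset.mul_sum, hDv, ← pow_two]
    exact hu1
  · intro k
    simp_rw [hDu]
    exact hDv k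
end

section
/- Let c = (c_{k,l}) be an m × n real matrix with all entries strictly positive, and define D_{k,l} = c_{k,l}/√(c_{k+} c_{+l}) where c_{k+} = ∑_l c_{k,l} and c_{+l} = ∑_k c_{k,l}. Then the symmetric positive semidefinite matrix D Dᵀ has all its eigenvalues in the interval [0,1], the value 1 is an eigenvalue, and the eigenvalue 1 has multiplicity one (its eigenspace is the one-dimensional span of the vector (√(c_{1+}),…,√(c_{m+}))ᵀ). -/
open Finset

/-- The symmetric matrix `D Dᵀ`. -/
noncomputable def DDt {m n : ℕ} (c : Fin m → Fin n → ℝ) (k k' : Fin m) : ℝ :=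
  ∑ l : Fin n, Dmat c k l * Dmat c k' l

theorem DDt_mulVec_aux {m n : ℕ} (c : Fin m → Fin n → ℝ) (x : Fin m → ℝ) (k : Fin m) :
    ∑ k' : Fin m, DDt c k k' * x k' = ∑ l : Fin n, Dmat c k l * ∑ k' : Fin m, Dmat c k' l * x k' := by
  simp only [DDt, Finset.sum_mul, Finset.mul_sum]
  rw [Finset.sum_comm]
  simp only [mul_assoc]

theorem DDt_quad_aux {m n : ℕ} (c : Fin m → Fin n → ℝ) (x : Fin m → ℝ) :
    ∑ k : Fin m, x k * ∑ k' : Fin m, DDt c k k' * x k'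
      = ∑ l : Fin n, (∑ k : Fin m, Dmat c k l * x k) ^ 2 := by
  simp only [DDt_mulVec_aux]
  simp only [Finset.mul_sum (s := (Finset.univ : Finset (Fin n)))]
  rw [Finset.sum_comm]
  refine Finset.sum_congr rfl fun l _ => ?_
  rw [sq, Finset.sum_mul]
  exact Finset.sum_congr rfl fun k _ => by ring

theorem DDt_key_aux {m n : ℕ} (hm : 1 ≤ m) (hn : 1 ≤ n)
    (c : Fin m → Fin n → ℝ) (hc : ∀ k l, 0 < c k l) (x : Fin m → ℝ) :
    ∃ w : Fin n → ℝ, ∑ k : Fin m, x k ^ 2 - ∑ l : Fin n, (∑ k : Fin m, Dmat c k l * x k) ^ 2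
      = ∑ l : Fin n, ∑ k : Fin m, c k l * (x k / Real.sqrt (∑ l' : Fin n, c k l') - w l) ^ 2 := by
  haveI : Nonempty (Fin m) := ⟨⟨0, hm⟩⟩
  haveI : Nonempty (Fin n) := ⟨⟨0, hn⟩⟩
  have hr : ∀ k, 0 < ∑ l' : Fin n, c k l' := fun k =>
    Finset.sum_pos (fun l _ => hc k l) Finset.univ_nonempty
  have hs : ∀ l, 0 < ∑ k' : Fin m, c k' l := fun l =>
    Finset.sum_pos (fun k _ => hc k l) Finset.univ_nonempty
  set u : Fin m → ℝ := fun k => x k / Real.sqrt (∑ l' : Fin n, c k l') with hu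
  refine ⟨fun l => (∑ k, c k l * u k) / ∑ k' : Fin m, c k' l, ?_⟩
  have h1 : ∑ k : Fin m, x k ^ 2 = ∑ l : Fin n, ∑ k : Fin m, c k l * u k ^ 2 := by
    rw [Finset.sum_comm]
    refine Finset.sum_congr rfl fun k _ => ?_
    rw [← Finset.sum_mul, hu]
    simp only [div_pow, Real.sq_sqrt (hr k).le]
    field_simp [(hr k).ne']
  rw [h1, ← Finset.sum_sub_distrib]
  refine Finset.sum_congr rfl fun l _ => ?_
  have h2 : ∑ k : Fin m, Dmat c k l * x k
      = (∑ k, c k l * u k) / Real.sqrt (∑ k' : Fin m, c k' l) := by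
    rw [Finset.sum_div]
    refine Finset.sum_congr rfl fun k _ => ?_
    rw [Dmat, Real.sqrt_mul (hr k).le, hu]
    have := (Real.sqrt_pos.2 (hr k)).ne'
    have := (Real.sqrt_pos.2 (hs l)).ne'
    field_simp
  rw [h2, div_pow, Real.sq_sqrt (hs l).le]
  have h3 : ∀ w : ℝ, ∑ k, c k l * (u k - w) ^ 2
      = ∑ k, c k l * u k ^ 2 - 2 * w * (∑ k, c k l * u k) + w ^ 2 * ∑ k, c k l := by
    intro w
    rw [Finset.mul_sum, Finset.mul_sum, ← Finset.sum_sub_distrib, ← Finset.sum_add_distrib]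
    exact Finset.sum_congr rfl fun k _ => by ring
  have h4 := h3 ((∑ k, c k l * u k) / ∑ k' : Fin m, c k' l)
  refine Eq.trans ?_ h4.symm
  have := (hs l).ne'
  field_simp
  ring

/-- All eigenvalues of `D Dᵀ` lie in `[0,1]`, `1` is an eigenvalue, and the eigenspace of
the eigenvalue `1` is the one-dimensional span of `(√(c_{1+}),…,√(c_{m+}))ᵀ`. -/
theorem DDt_eigenvalues (m n : ℕ) (hm : 1 ≤ m) (hn : 1 ≤ n)
    (c : Fin m → Fin n → ℝ) (hc : ∀ k l, 0 < c k l) :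
    (∀ (t : ℝ) (x : Fin m → ℝ), x ≠ 0 →
      (∀ k, ∑ k' : Fin m, DDt c k k' * x k' = t * x k) → 0 ≤ t ∧ t ≤ 1) ∧
    (∀ k, ∑ k' : Fin m, DDt c k k' * Real.sqrt (∑ l : Fin n, c k' l)
        = Real.sqrt (∑ l : Fin n, c k l)) ∧
    (∀ x : Fin m → ℝ, (∀ k, ∑ k' : Fin m, DDt c k k' * x k' = x k) →
      ∃ a : ℝ, ∀ k, x k = a * Real.sqrt (∑ l : Fin n, c k l)) := by
  haveI : Nonempty (Fin m) := ⟨⟨0, hm⟩⟩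
  haveI : Nonempty (Fin n) := ⟨⟨0, hn⟩⟩
  have hr : ∀ k, 0 < ∑ l' : Fin n, c k l' := fun k =>
    Finset.sum_pos (fun l _ => hc k l) Finset.univ_nonempty
  have hs : ∀ l, 0 < ∑ k' : Fin m, c k' l := fun l =>
    Finset.sum_pos (fun k _ => hc k l) Finset.univ_nonempty
  refine ⟨?_, ?_, ?_⟩
  · intro t x hx h
    have hq := DDt_quad_aux c x
    have h1 : ∑ k : Fin m, x k * ∑ k' : Fin m, DDt c k k' * x k' = t * ∑ k, x k ^ 2 := by
      rw [Finset.mul_sum]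
      exact Finset.sum_congr rfl fun k _ => by rw [h k]; ring
    rw [h1] at hq
    obtain ⟨w, hw⟩ := DDt_key_aux hm hn c hc x
    have hp : 0 < ∑ k, x k ^ 2 := by
      obtain ⟨k, hk⟩ := Function.ne_iff.1 hx
      have hk' : x k ≠ 0 := hk
      exact Finset.sum_pos' (fun i _ => sq_nonneg _) ⟨k, Finset.mem_univ _, by positivity⟩
    have h2 : 0 ≤ ∑ l : Fin n, (∑ k : Fin m, Dmat c k l * x k) ^ 2 :=
      Finset.sum_nonneg fun l _ => sq_nonneg _
    have h3 : 0 ≤ ∑ l : Fin n, ∑ k : Fin m,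
        c k l * (x k / Real.sqrt (∑ l' : Fin n, c k l') - w l) ^ 2 :=
      Finset.sum_nonneg fun l _ => Finset.sum_nonneg fun k _ =>
        mul_nonneg (hc k l).le (sq_nonneg _)
    rw [← hw, ← hq] at h3
    rw [← hq] at h2
    constructor
    · exact nonneg_of_mul_nonneg_left h2 hp
    · by_contra! ht
      nlinarith
  · intro k
    rw [DDt_mulVec_aux c (fun k' => Real.sqrt (∑ l : Fin n, c k' l)) k]
    have h1 : ∀ l, ∑ k' : Fin m, Dmat c k' l * Real.sqrt (∑ l : Fin n, c k' l)
        = Real.sqrt (∑ k' : Fin m, c k' l) := by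
      intro l
      have h2 : ∀ k', Dmat c k' l * Real.sqrt (∑ l : Fin n, c k' l)
          = c k' l / Real.sqrt (∑ k' : Fin m, c k' l) := by
        intro k'
        rw [Dmat, Real.sqrt_mul (hr k').le]
        have := (Real.sqrt_pos.2 (hr k')).ne'
        have := (Real.sqrt_pos.2 (hs l)).ne'
        field_simp
      simp only [h2]
      rw [← Finset.sum_div, Real.div_sqrt]
    simp only [h1]
    have h2 : ∀ l, Dmat c k l * Real.sqrt (∑ k' : Fin m, c k' l)
        = c k l / Real.sqrt (∑ l : Fin n, c k l) := by
      intro l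
      rw [Dmat, Real.sqrt_mul (hr k).le]
      have := (Real.sqrt_pos.2 (hr k)).ne'
      have := (Real.sqrt_pos.2 (hs l)).ne'
      field_simp
    simp only [h2]
    rw [← Finset.sum_div, Real.div_sqrt]
  · intro x h
    have hq := DDt_quad_aux c x
    have h1 : ∑ k : Fin m, x k * ∑ k' : Fin m, DDt c k k' * x k' = ∑ k, x k ^ 2 :=
      Finset.sum_congr rfl fun k _ => by rw [h k]; ring
    rw [h1] at hq
    obtain ⟨w, hw⟩ := DDt_key_aux hm hn c hc x
    rw [← hq, sub_self] at hw
    have hnn : ∀ l k, 0 ≤ c k l * (x k / Real.sqrt (∑ l' : Fin n, c k l') - w l) ^ 2 :=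
      fun l k => mul_nonneg (hc k l).le (sq_nonneg _)
    have h2 := (Finset.sum_eq_zero_iff_of_nonneg
      (fun l _ => Finset.sum_nonneg fun k _ => hnn l k)).1 hw.symm ⟨0, hn⟩ (Finset.mem_univ _)
    refine ⟨w ⟨0, hn⟩, fun k => ?_⟩
    have h3 := (Finset.sum_eq_zero_iff_of_nonneg (fun k _ => hnn _ k)).1 h2 k (Finset.mem_univ _)
    have h4 := (mul_eq_zero.1 h3).resolve_left (hc k _).ne'
    have h5 := sub_eq_zero.1 (pow_eq_zero_iff two_ne_zero |>.1 h4)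
    exact (div_eq_iff (Real.sqrt_pos.2 (hr k)).ne').1 h5
end
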